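/- arXiv:2311.14879 — 2 statements merged into one kernel-verified Lean document; each statement's English description precedes it below -/
import Mathlib

section
/- Let S and A be (2,2) double forms on 4-dimensional Minkowski space with S_{cdab} = S_{abcd} (symmetric) and A_{cdab} = −A_{abcd} (antisymmetric) for all indices. Then for all a,b,c,d: ⋆⋆S_{abcd} + S_{abcd} = η_{ac} Ŝ_{bd} − η_{ad} Ŝ_{bc} + η_{bd} Ŝ_{ac} − η_{bc} Ŝ_{ad}, and ⋆⋆A_{abcd} − A_{abcd} = −(η_{ac} Â_{bd} − η_{ad} Â_{bc} + η_{bd} Â_{ac} − η_{bc} Â_{ad}), where ⋆⋆Y_{abcd} = (1/4) ε_{ab}{}^{pq} ε_{cd}{}^{rs} Y_{pqrs} denotes the double Hodge dual. -/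
noncomputable section

/-- The Minkowski metric `η = diag(+1,−1,−1,−1)` on `ℝ⁴`.  Its inverse has the
same components, so `mink` is also used to raise indices. -/
def mink : Fin 4 → Fin 4 → ℝ :=
  fun a b => if a = b then (if a = 0 then 1 else -1) else 0

/-- The totally antisymmetric Levi-Civita tensor with all indices down and
`ε₀₁₂₃ = +1`, via the Vandermonde-product formula. -/
def lev : Fin 4 → Fin 4 → Fin 4 → Fin 4 → ℝ :=
  fun a b c d =>
    (((b : ℕ) : ℝ) - ((a : ℕ) : ℝ)) * (((c : ℕ) : ℝ) - ((a : ℕ) : ℝ)) *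
    (((d : ℕ) : ℝ) - ((a : ℕ) : ℝ)) * (((c : ℕ) : ℝ) - ((b : ℕ) : ℝ)) *
    (((d : ℕ) : ℝ) - ((b : ℕ) : ℝ)) * (((d : ℕ) : ℝ) - ((c : ℕ) : ℝ)) / 12

/-- `ε_{ab}{}^{pq}`: the Levi-Civita tensor with its last two indices raised
by the Minkowski metric. -/
def levUp (a b p q : Fin 4) : ℝ := ∑ r, ∑ s, mink p r * mink q s * lev a b r s

/-- The Kronecker delta on `Fin 4`. -/
def kd (a b : Fin 4) : ℝ := if a = b then 1 else 0

/-- Hodge dual `⋆F_{ab} = (1/2) ε_{ab}{}^{pq} F_{pq}` of a rank-2 tensor. -/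
def hodge2 (F : Fin 4 → Fin 4 → ℝ) (a b : Fin 4) : ℝ :=
  (1/2) * ∑ p, ∑ q, levUp a b p q * F p q

/-- Left Hodge dual `←⋆X_{abcd} = (1/2) ε_{ab}{}^{pq} X_{pqcd}`. -/
def leftD (X : Fin 4 → Fin 4 → Fin 4 → Fin 4 → ℝ) (a b c d : Fin 4) : ℝ :=
  (1/2) * ∑ p, ∑ q, levUp a b p q * X p q c d

/-- Right Hodge dual `→⋆X_{abcd} = (1/2) ε_{cd}{}^{pq} X_{abpq}`. -/
def rightD (X : Fin 4 → Fin 4 → Fin 4 → Fin 4 → ℝ) (a b c d : Fin 4) : ℝ :=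
  (1/2) * ∑ p, ∑ q, levUp c d p q * X a b p q

/-- Double Hodge dual `⋆⋆X_{abcd} = (1/4) ε_{ab}{}^{pq} ε_{cd}{}^{rs} X_{pqrs}`. -/
def dblD (X : Fin 4 → Fin 4 → Fin 4 → Fin 4 → ℝ) (a b c d : Fin 4) : ℝ :=
  (1/4) * ∑ p, ∑ q, ∑ r, ∑ s, levUp a b p q * levUp c d r s * X p q r s

/-- First trace `X_{ac} = η^{bd} X_{abcd}` of a (2,2) double form. -/
def tr1 (X : Fin 4 → Fin 4 → Fin 4 → Fin 4 → ℝ) (a c : Fin 4) : ℝ :=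
  ∑ b, ∑ d, mink b d * X a b c d

/-- Second trace `X = η^{ac} X_{ac}` of a (2,2) double form. -/
def tr2 (X : Fin 4 → Fin 4 → Fin 4 → Fin 4 → ℝ) : ℝ :=
  ∑ a, ∑ c, mink a c * tr1 X a c

/-- Hatted (trace-free) tensor `X̂_{ab} = X_{ab} − (1/4) X η_{ab}`. -/
def hatT (X : Fin 4 → Fin 4 → Fin 4 → Fin 4 → ℝ) (a b : Fin 4) : ℝ :=
  tr1 X a b - (1/4) * tr2 X * mink a b

/-- Rank-2 tensor with both indices raised by the Minkowski metric. -/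
def up2 (F : Fin 4 → Fin 4 → ℝ) (a b : Fin 4) : ℝ :=
  ∑ p, ∑ q, mink a p * mink b q * F p q

/-- Rank-4 tensor with all indices raised by the Minkowski metric. -/
def up4 (X : Fin 4 → Fin 4 → Fin 4 → Fin 4 → ℝ) (a b c d : Fin 4) : ℝ :=
  ∑ p, ∑ q, ∑ r, ∑ s, mink a p * mink b q * mink c r * mink d s * X p q r s

/-!
Since `ε_{ab}{}^{pq}` is the determinant of the vectors `e_a, e_b, e^p, e^q`, the product
`ε_{ab}{}^{pq} ε_{cd}{}^{rs}` is `det η = -1` times a Gram determinant, whose entries are components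
of `η` and `δ`. Each term of its expansion, contracted with a double form `X`, gives the transposed
form `X_{cdab}`, a first trace times the metric, or the second trace times two metrics. This yields
an identity for every double form; its symmetric and antisymmetric cases follow because the traces
inherit the sign of `X` under exchange of index pairs.
-/

open Matrix

section Contraction

variable {n R : Type*} [CommRing R]

theorem sum_sub_swap_mul_of_antisymm [Fintype n] (K F : n → n → R)
    (hF : ∀ p q, F p q = -F q p) :
    ∑ p, ∑ q, (K p q - K q p) * F p q = 2 * ∑ p, ∑ q, K p q * F p q := by
  have swap : ∑ p, ∑ q, K q p * F p q = -∑ p, ∑ q, K p q * F p q := by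
    rw [Finset.sum_comm, ← Finset.sum_neg_distrib]
    simp only [← Finset.sum_neg_distrib, ← mul_neg, ← hF]
  simp only [sub_mul, Finset.sum_sub_distrib, swap]
  ring

theorem sum_pairs_comm {M : Type*} [AddCommMonoid M] [Fintype n] (f : n → n → n → n → M) :
    ∑ p, ∑ q, ∑ r, ∑ s, f p q r s = ∑ r, ∑ s, ∑ p, ∑ q, f p q r s := by
  rw [Finset.sum_comm_cycle]
  exact Finset.sum_congr rfl fun _ _ => Finset.sum_comm_cycle

theorem sum_sub_swap_left_mul_of_antisymm [Fintype n] (K X : n → n → n → n → R)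
    (hX : ∀ p q r s, X p q r s = -X q p r s) :
    ∑ p, ∑ q, ∑ r, ∑ s, (K p q r s - K q p r s) * X p q r s =
      2 * ∑ p, ∑ q, ∑ r, ∑ s, K p q r s * X p q r s := by
  have fixed_second_pair (r s : n) := sum_sub_swap_mul_of_antisymm
    (fun p q => K p q r s) (fun p q => X p q r s) fun p q => hX p q r s
  rw [sum_pairs_comm, sum_pairs_comm fun p q r s => K p q r s * X p q r s]
  simp only [fixed_second_pair, ← Finset.mul_sum]

variable [DecidableEq n]

local notation "δ" => (1 : Matrix n n R)

/-- The vectors `e_a, e_b, e^p, e^q`, where `e^p = h^{pr} e_r` is a basis vector with its index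
raised by the inverse metric `h`, as the rows of a matrix. -/
def mixedFrame (h : Matrix n n R) (a b p q : n) : Matrix (Fin 4) n R :=
  of ![δ a, δ b, h p, h q]

/-- The Gram matrix of `e_a, e_b, e^p, e^q` against `e_c, e_d, e^r, e^s`, for a metric `g` with
inverse `h`: the indices `a b c d` are down and `p q r s` are up, so that the off-diagonal blocks
are Kronecker deltas. -/
def mixedGram (g h : Matrix n n R) (a b c d p q r s : n) : Matrix (Fin 4) (Fin 4) R :=
  !![g a c, g a d, δ a r, δ a s;
     g b c, g b d, δ b r, δ b s;
     δ p c, δ p d, h p r, h p s;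
     δ q c, δ q d, h q r, h q s]

theorem mixedFrame_mul_mul_transpose [Fintype n] {g h : Matrix n n R} (hg : h * g = 1)
    (hh : h.IsSymm) (a b c d p q r s : n) :
    mixedFrame h a b p q * g * (mixedFrame h c d r s)ᵀ = mixedGram g h a b c d p q r s := by
  have lowered : mixedFrame h a b p q * g = of ![g a, g b, δ p, δ q] := by
    rw [← hg]
    ext i j
    fin_cases i <;> simp [mixedFrame, mul_apply, one_apply]
  have metric_mul_raised (i j : n) : ∑ x, g i x * h j x = δ i j := by
    rw [← mul_eq_one_comm.mp hg]
    simp only [mul_apply, hh.apply]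
  rw [lowered]
  ext i j
  fin_cases i <;> fin_cases j <;>
    simp [mixedFrame, mixedGram, mul_apply, metric_mul_raised, hh.apply, one_apply]

/-- The terms of `det (mixedGram g h a b c d p q r s)` with at most one factor `g`, one
representative for each orbit under the exchanges of `p, q` and of `r, s`. -/
def mixedGramKernel (g h : Matrix n n R) (a b c d p q r s : n) : R :=
  δ p c * δ q d * δ a r * δ b s -
    (g a c * δ p d * δ b r - g a d * δ p c * δ b r +
      g b d * δ p c * δ a r - g b c * δ p d * δ a r) * h q s

theorem det_mixedGram (g h : Matrix n n R) (a b c d p q r s : n) :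
    (mixedGram g h a b c d p q r s).det =
      (g a c * g b d - g a d * g b c) * (h p r * h q s - h q r * h p s) +
      ((mixedGramKernel g h a b c d p q r s - mixedGramKernel g h a b c d q p r s) -
        (mixedGramKernel g h a b c d p q s r - mixedGramKernel g h a b c d q p s r)) := by
  rw [mixedGram, det_succ_row_zero]
  simp [Fin.sum_univ_succ, Fin.succAbove, det_fin_three, mixedGramKernel]
  ring

variable [Fintype n]

theorem sum_mixedGramKernel_mul (g h : Matrix n n R) (X : n → n → n → n → R) (a b c d : n) :
    ∑ p, ∑ q, ∑ r, ∑ s, mixedGramKernel g h a b c d p q r s * X p q r s =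
      X c d a b -
        (g a c * ∑ q, ∑ s, h q s * X d q b s - g a d * ∑ q, ∑ s, h q s * X c q b s +
          g b d * ∑ q, ∑ s, h q s * X c q a s - g b c * ∑ q, ∑ s, h q s * X d q a s) := by
  simp [mixedGramKernel, sub_mul, add_mul, Finset.sum_add_distrib, Finset.sum_sub_distrib,
    one_apply, Finset.sum_ite_irrel, Finset.mul_sum, mul_assoc]

theorem sum_det_mixedGram_mul (g h : Matrix n n R) (X : n → n → n → n → R)
    (h₁ : ∀ p q r s, X p q r s = -X q p r s) (h₂ : ∀ p q r s, X p q r s = -X p q s r)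
    (a b c d : n) :
    ∑ p, ∑ q, ∑ r, ∑ s, (mixedGram g h a b c d p q r s).det * X p q r s =
      2 * (g a c * g b d - g a d * g b c) *
        ∑ p, ∑ r, h p r * ∑ q, ∑ s, h q s * X p q r s +
      4 * ∑ p, ∑ q, ∑ r, ∑ s, mixedGramKernel g h a b c d p q r s * X p q r s := by
  have metric_part : ∑ p, ∑ q, ∑ r, ∑ s, (h p r * h q s - h q r * h p s) * X p q r s =
      2 * ∑ p, ∑ r, h p r * ∑ q, ∑ s, h q s * X p q r s := by
    rw [sum_sub_swap_left_mul_of_antisymm (fun p q r s => h p r * h q s) X h₁]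
    simp only [Finset.mul_sum, mul_assoc]
    exact Finset.sum_congr rfl fun p _ => Finset.sum_comm
  have kernel_part : ∑ p, ∑ q, ∑ r, ∑ s,
      ((mixedGramKernel g h a b c d p q r s - mixedGramKernel g h a b c d q p r s) -
        (mixedGramKernel g h a b c d p q s r - mixedGramKernel g h a b c d q p s r)) *
          X p q r s =
      4 * ∑ p, ∑ q, ∑ r, ∑ s, mixedGramKernel g h a b c d p q r s * X p q r s := by
    have second_pair (p q : n) := sum_sub_swap_mul_of_antisymm
      (fun r s => mixedGramKernel g h a b c d p q r s - mixedGramKernel g h a b c d q p r s)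
      (X p q) (h₂ p q)
    have first_pair := sum_sub_swap_left_mul_of_antisymm (mixedGramKernel g h a b c d) X h₁
    simp only [second_pair, ← Finset.mul_sum, first_pair]
    ring
  simp only [det_mixedGram, add_mul, mul_assoc, Finset.sum_add_distrib, ← Finset.mul_sum]
  rw [metric_part, kernel_part]
  ring

end Contraction

theorem det_vandermonde_fin_four {R : Type*} [CommRing R] (x : Fin 4 → R) :
    (vandermonde x).det =
      (x 1 - x 0) * (x 2 - x 0) * (x 3 - x 0) * (x 2 - x 1) * (x 3 - x 1) * (x 3 - x 2) := by
  rw [det_vandermonde, Fin.prod_univ_four, show Finset.Ioi (0 : Fin 4) = {1, 2, 3} by decide,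
    show Finset.Ioi (1 : Fin 4) = {2, 3} by decide, show Finset.Ioi (2 : Fin 4) = {3} by decide,
    show Finset.Ioi (3 : Fin 4) = ∅ by decide]
  simp [mul_assoc]

theorem lev_eq_det (a b c d : Fin 4) :
    lev a b c d = (mixedFrame (1 : Matrix _ _ ℝ) a b c d).det := by
  let V : Matrix (Fin 4) (Fin 4) ℝ := vandermonde fun i => ((i : ℕ) : ℝ)
  have det_V : V.det = 12 := by
    norm_num [V, det_vandermonde_fin_four]
  have select_rows : mixedFrame 1 a b c d * V =
      vandermonde fun i => ((![a, b, c, d] i : ℕ) : ℝ) := by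
    ext i j
    fin_cases i <;> simp [V, mixedFrame, mul_apply, one_apply, vandermonde_apply]
  have twelve_mul := congrArg det select_rows
  rw [det_mul, det_V, det_vandermonde_fin_four] at twelve_mul
  exact (eq_div_of_mul_eq (by norm_num) twelve_mul).symm

theorem mink_eq_diagonal : of mink = diagonal ![1, -1, -1, -1] := by
  ext i j
  fin_cases i <;> fin_cases j <;> simp [mink]

theorem det_mink : (of mink).det = -1 := by
  simp [mink_eq_diagonal, Fin.prod_univ_four]

theorem mink_mul_mink : of mink * of mink = 1 := by
  rw [mink_eq_diagonal, diagonal_mul_diagonal, ← diagonal_one]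
  congr 1
  ext i
  fin_cases i <;> simp

theorem isSymm_mink : (of mink).IsSymm := by
  rw [mink_eq_diagonal]
  exact isSymm_diagonal _

theorem mink_comm (a b : Fin 4) : mink a b = mink b a :=
  isSymm_mink.apply b a

theorem levUp_eq_det (a b p q : Fin 4) :
    levUp a b p q = (mixedFrame (of mink) a b p q).det := by
  have raise_by_sign : levUp a b p q = mink p p * mink q q * lev a b p q := by
    simp [levUp, mink]
  have mink_row (i j : Fin 4) : mink i j = mink i i * (1 : Matrix (Fin 4) (Fin 4) ℝ) i j := by
    simp [mink, one_apply]
  have scale_rows : mixedFrame (of mink) a b p q =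
      of fun i j => ![1, 1, mink p p, mink q q] i * mixedFrame (1 : Matrix _ _ ℝ) a b p q i j := by
    ext i j
    fin_cases i <;> simp [mixedFrame, mink_row p j, mink_row q j]
  rw [raise_by_sign, scale_rows, det_mul_column, lev_eq_det]
  simp [Fin.prod_univ_four]

theorem levUp_mul_levUp (a b c d p q r s : Fin 4) :
    levUp a b p q * levUp c d r s =
      -(mixedGram (of mink) (of mink) a b c d p q r s).det := by
  rw [← mixedFrame_mul_mul_transpose mink_mul_mink isSymm_mink, det_mul, det_mul,
    det_transpose, det_mink, levUp_eq_det, levUp_eq_det]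
  ring

theorem ruse_lanczos_sym_skew_general (X : Fin 4 → Fin 4 → Fin 4 → Fin 4 → ℝ)
    (h₁ : ∀ a b c d, X a b c d = -X b a c d) (h₂ : ∀ a b c d, X a b c d = -X a b d c)
    (a b c d : Fin 4) :
    dblD X a b c d + X c d a b =
      mink a c * hatT X d b - mink a d * hatT X c b +
      mink b d * hatT X c a - mink b c * hatT X d a := by
  have contraction := sum_det_mixedGram_mul (of mink) (of mink) X h₁ h₂ a b c d
  rw [sum_mixedGramKernel_mul] at contraction
  simp only [of_apply] at contraction
  simp only [dblD, levUp_mul_levUp, neg_mul, Finset.sum_neg_distrib, contraction, hatT, tr1, tr2,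
    mink_comm d b, mink_comm c b, mink_comm c a, mink_comm d a]
  ring

section PairExchange

variable {X : Fin 4 → Fin 4 → Fin 4 → Fin 4 → ℝ} {σ : ℝ}

theorem tr1_swap_of_pair_swap (hX : ∀ a b c d, X c d a b = σ * X a b c d) (a c : Fin 4) :
    tr1 X c a = σ * tr1 X a c := by
  simp only [tr1, Finset.mul_sum]
  rw [Finset.sum_comm]
  refine Finset.sum_congr rfl fun b _ => Finset.sum_congr rfl fun d _ => ?_
  rw [hX a b c d, mink_comm, mul_left_comm]

theorem tr2_eq_mul_of_pair_swap (hX : ∀ a b c d, X c d a b = σ * X a b c d) :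
    tr2 X = σ * tr2 X := by
  conv_lhs => rw [tr2, Finset.sum_comm]
  simp only [tr2, Finset.mul_sum]
  refine Finset.sum_congr rfl fun a _ => Finset.sum_congr rfl fun c _ => ?_
  rw [tr1_swap_of_pair_swap hX a c, mink_comm, mul_left_comm]

theorem hatT_swap_of_pair_swap (hX : ∀ a b c d, X c d a b = σ * X a b c d) (a b : Fin 4) :
    hatT X b a = σ * hatT X a b := by
  rw [hatT, hatT, tr1_swap_of_pair_swap hX a b, mink_comm b a]
  linear_combination -(1 / 4) * mink a b * tr2_eq_mul_of_pair_swap hX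

theorem dblD_add_mul_of_pair_swap (h₁ : ∀ a b c d, X a b c d = -X b a c d)
    (h₂ : ∀ a b c d, X a b c d = -X a b d c) (hX : ∀ a b c d, X c d a b = σ * X a b c d)
    (a b c d : Fin 4) :
    dblD X a b c d + σ * X a b c d =
      σ * (mink a c * hatT X b d - mink a d * hatT X b c +
        mink b d * hatT X a c - mink b c * hatT X a d) := by
  have identity := ruse_lanczos_sym_skew_general X h₁ h₂ a b c d
  have hat_swap := hatT_swap_of_pair_swap hX
  rw [hX, hat_swap b d, hat_swap b c, hat_swap a c, hat_swap a d] at identity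
  linear_combination identity

end PairExchange

/-- Ruse–Lanczos identity for the symmetric and antisymmetric parts of a
(2,2) double form. -/
theorem ruse_lanczos_sym_skew
    (S A : Fin 4 → Fin 4 → Fin 4 → Fin 4 → ℝ)
    (hS1 : ∀ a b c d, S a b c d = -S b a c d)
    (hS2 : ∀ a b c d, S a b c d = -S a b d c)
    (hSsym : ∀ a b c d, S c d a b = S a b c d)
    (hA1 : ∀ a b c d, A a b c d = -A b a c d)
    (hA2 : ∀ a b c d, A a b c d = -A a b d c)
    (hAskew : ∀ a b c d, A c d a b = -A a b c d) :
    (∀ a b c d, dblD S a b c d + S a b c d =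
      mink a c * hatT S b d - mink a d * hatT S b c +
      mink b d * hatT S a c - mink b c * hatT S a d) ∧
    (∀ a b c d, dblD A a b c d - A a b c d =
      -(mink a c * hatT A b d - mink a d * hatT A b c +
        mink b d * hatT A a c - mink b c * hatT A a d)) := by
  constructor <;> intro a b c d
  · linear_combination dblD_add_mul_of_pair_swap (σ := 1) hS1 hS2 (by simpa using hSsym) a b c d
  · linear_combination dblD_add_mul_of_pair_swap (σ := -1) hA1 hA2 (by simpa using hAskew) a b c d
end
end

section
/- (Generalised Bel–Matte decomposition) Let X be a (2,2) double form on 4-dimensional Minkowski space and let t : Fin 4 → ℝ satisfy t_{q} t^{q} ≠ 0. Define 𝔄_{ac} = X_{abcd} t^{b} t^{d}, 𝔅_{ac} = −(→⋆X)_{abcd} t^{b} t^{d}, ℭ_{ac} = −(←⋆X)_{abcd} t^{b} t^{d}, 𝔇_{ac} = (⋆⋆X)_{abcd} t^{b} t^{d}, and t_{ab} = t_{a} t_{b}. Then for all a,b,c,d: (t_{q}t^{q})² X_{abcd} = (𝔄 ⊙ t⊗t)_{abcd} + →⋆(𝔅 ⊙ t⊗t)_{abcd} + ←⋆(ℭ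 ⊙ t⊗t)_{abcd} + ⋆⋆(𝔇 ⊙ t⊗t)_{abcd}, where (k ⊙ h)_{abcd} = k_{ac} h_{bd} − k_{ad} h_{bc} + h_{ac} k_{bd} − h_{ad} k_{bc} is the Kulkarni–Nomizu product of two rank-2 tensors. -/
noncomputable section

/-- Kulkarni–Nomizu product of two rank-2 tensors. -/
def kn (k h : Fin 4 → Fin 4 → ℝ) (a b c d : Fin 4) : ℝ :=
  k a c * h b d - k a d * h b c + h a c * k b d - h a d * k b c

/-- The vector `t` with its index lowered by the Minkowski metric. -/
def tlow (t : Fin 4 → ℝ) (a : Fin 4) : ℝ := ∑ p, mink a p * t p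

/-- `𝔄_{ac} = X_{abcd} t^b t^d`. -/
def frakA (X : Fin 4 → Fin 4 → Fin 4 → Fin 4 → ℝ) (t : Fin 4 → ℝ) (a c : Fin 4) : ℝ :=
  ∑ b, ∑ d, X a b c d * t b * t d

/-- `𝔅_{ac} = −(→⋆X)_{abcd} t^b t^d`. -/
def frakB (X : Fin 4 → Fin 4 → Fin 4 → Fin 4 → ℝ) (t : Fin 4 → ℝ) (a c : Fin 4) : ℝ :=
  -∑ b, ∑ d, rightD X a b c d * t b * t d

/-- `ℭ_{ac} = −(←⋆X)_{abcd} t^b t^d`. -/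
def frakC (X : Fin 4 → Fin 4 → Fin 4 → Fin 4 → ℝ) (t : Fin 4 → ℝ) (a c : Fin 4) : ℝ :=
  -∑ b, ∑ d, leftD X a b c d * t b * t d

/-- `𝔇_{ac} = (⋆⋆X)_{abcd} t^b t^d`. -/
def frakD (X : Fin 4 → Fin 4 → Fin 4 → Fin 4 → ℝ) (t : Fin 4 → ℝ) (a c : Fin 4) : ℝ :=
  ∑ b, ∑ d, dblD X a b c d * t b * t d

/-!
Splitting a 2-form into its electric and magnetic parts along `t` reads `(t·t) F = E F - ⋆E⋆F` with
`(E F)_{ab} = F_{ap} t^p t_b − F_{bp} t^p t_a`; it follows by contracting the product of two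
Levi-Civita symbols, a determinant of Kronecker deltas. A (2,2) double form carries two commuting
copies of the operators on 2-forms, one for each pair of indices. Multiplying the splittings in the
two pairs and moving the two copies of `E` together gives the four terms, because applying `E` in
both pairs is `X ↦ 𝔄 ⊙ t⊗t`.
-/

section PairActions

variable {R ι κ : Type*} [CommSemiring R]

/-- The action of operators on rank-2 tensors on the first pair of indices of a rank-4 tensor. -/
def leftAct : Module.End R (ι → ι → R) →ₐ[R] Module.End R (ι → ι → κ → κ → R) :=
  AlgHom.ofLinearMap
    { toFun := fun T =>
        { toFun := fun X a b c d => T (fun p q => X p q c d) a b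
          map_add' := fun X Y => by
            funext a b c d
            exact congrFun₂ (T.map_add (fun p q => X p q c d) (fun p q => Y p q c d)) a b
          map_smul' := fun r X => by
            funext a b c d
            exact congrFun₂ (T.map_smul r (fun p q => X p q c d)) a b }
      map_add' := fun _ _ => rfl
      map_smul' := fun _ _ => rfl }
    rfl fun _ _ => rfl

/-- The action of operators on rank-2 tensors on the second pair of indices of a rank-4 tensor. -/
def rightAct : Module.End R (κ → κ → R) →ₐ[R] Module.End R (ι → ι → κ → κ → R) :=
  AlgHom.ofLinearMap
    { toFun := fun T => (T.compLeft ι).compLeft ι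
      map_add' := fun _ _ => rfl
      map_smul' := fun _ _ => rfl }
    rfl fun _ _ => rfl

theorem rightAct_apply (T : Module.End R (κ → κ → R)) (X : ι → ι → κ → κ → R) (a b : ι) (c d : κ) :
    rightAct T X a b c d = T (X a b) c d :=
  rfl

theorem linearMap_apply_eq_sum_single [Fintype ι] [DecidableEq ι] (T : Module.End R (ι → ι → R))
    (F : ι → ι → R) : T F = ∑ p, ∑ q, F p q • T (Pi.single p (Pi.single q 1)) := by
  have hF : F = ∑ p, ∑ q, F p q • Pi.single p (Pi.single q (1 : R)) := by
    funext a b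
    simp [Finset.sum_apply, Pi.single_apply, apply_ite, ite_apply]
  conv_lhs => rw [hF]
  simp only [map_sum, map_smul]

theorem commute_leftAct_rightAct [Finite ι] (S : Module.End R (ι → ι → R))
    (T : Module.End R (κ → κ → R)) : Commute (leftAct S) (rightAct T) := by
  classical
  cases nonempty_fintype ι
  refine LinearMap.ext fun X => ?_
  funext a b c d
  have hS : (fun r s => S (fun p q => X p q r s) a b) =
      ∑ p, ∑ q, S (Pi.single p (Pi.single q 1)) a b • X p q := by
    funext r s
    rw [linearMap_apply_eq_sum_single S]
    simp [Finset.sum_apply, mul_comm]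
  calc S (fun p q => T (X p q) c d) a b
      = ∑ p, ∑ q, S (Pi.single p (Pi.single q 1)) a b * T (X p q) c d := by
        rw [linearMap_apply_eq_sum_single S]
        simp [Finset.sum_apply, mul_comm]
    _ = T (fun r s => S (fun p q => X p q r s) a b) c d := by
        rw [hS]
        simp [Finset.sum_apply]

end PairActions

theorem sub_conj_mul_sub_conj {A : Type*} [Ring A] {e h e' h' : A} (hhe : Commute h e')
    (heh : Commute e h') (hhh : Commute h h') :
    (e - h * e * h) * (e' - h' * e' * h') =
      e * e' - h' * (e * e') * h' - h * (e * e') * h + h * h' * (e * e') * (h * h') := by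
  have right : e * (h' * e' * h') = h' * (e * e') * h' := by
    simp only [← mul_assoc, heh.eq]
  have left : h * e * h * e' = h * (e * e') * h := by
    simp only [mul_assoc, hhe.eq]
  have both : h * e * h * (h' * e' * h') = h * h' * (e * e') * (h * h') :=
    calc h * e * h * (h' * e' * h') = h * e * (h * h') * (e' * h') := by simp only [mul_assoc]
      _ = h * (e * h') * (h * e') * h' := by rw [hhh.eq]; simp only [mul_assoc]
      _ = h * (h' * e) * (e' * h) * h' := by rw [heh.eq, hhe.eq]
      _ = h * h' * (e * e') * (h * h') := by simp only [mul_assoc]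
  rw [mul_sub, sub_mul, sub_mul, right, left, both]
  abel

section BorderedDeterminant

open Matrix

variable {R : Type*} [CommRing R] {k : ℕ}

theorem det_succ_eq_sub_sum_adjugate (A : Matrix (Fin (k + 2)) (Fin (k + 2)) R) :
    A.det = A 0 0 * (A.submatrix Fin.succ Fin.succ).det -
      ∑ i, ∑ j, A 0 i.succ * (A.submatrix Fin.succ Fin.succ).adjugate i j * A j.succ 0 := by
  rw [det_succ_row_zero, Fin.sum_univ_succ, sub_eq_add_neg, ← Finset.sum_neg_distrib]
  congr 1
  · simp
  · refine Finset.sum_congr rfl fun i _ => ?_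
    rw [det_succ_column_zero, Finset.mul_sum, ← Finset.sum_neg_distrib]
    refine Finset.sum_congr rfl fun j _ => ?_
    have minor : ((A.submatrix Fin.succ i.succ.succAbove).submatrix j.succAbove Fin.succ) =
        (A.submatrix Fin.succ Fin.succ).submatrix j.succAbove i.succAbove := by
      ext r s
      simp
    rw [adjugate_fin_succ_eq_det_submatrix, minor, submatrix_apply, Fin.succ_succAbove_zero,
      Fin.val_succ]
    ring

theorem sum_det_submatrix_one {n : Type*} [Fintype n] [DecidableEq n] (v w : Fin (k + 1) → n) :
    ∑ i, ((1 : Matrix n n R).submatrix (vecCons i v) (vecCons i w)).det =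
      (Fintype.card n - (k + 1)) * ((1 : Matrix n n R).submatrix v w).det := by
  let D := (1 : Matrix n n R).submatrix v w
  have border (i : n) : ((1 : Matrix n n R).submatrix (vecCons i v) (vecCons i w)).det =
      D.det - ∑ j, ∑ l, (1 : Matrix n n R) i (w j) * D.adjugate j l * (1 : Matrix n n R) (v l) i :=
    (det_succ_eq_sub_sum_adjugate _).trans <| congrArg (· - _) <|
      show (1 : Matrix n n R) i i * D.det = D.det by rw [one_apply_eq, one_mul]
  have contract (j l : Fin (k + 1)) :
      ∑ i, (1 : Matrix n n R) i (w j) * D.adjugate j l * (1 : Matrix n n R) (v l) i =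
        D.adjugate j l * D l j := by
    simp [one_apply, D]
  calc ∑ i, ((1 : Matrix n n R).submatrix (vecCons i v) (vecCons i w)).det
      = Fintype.card n * D.det - ∑ j, ∑ l, D.adjugate j l * D l j := by
        simp only [border, Finset.sum_sub_distrib, Finset.sum_const, Finset.card_univ, nsmul_eq_mul,
          ← contract]
        simp only [Finset.sum_comm (s := (Finset.univ : Finset n))]
    _ = Fintype.card n * D.det - (D.adjugate * D).trace := rfl
    _ = (Fintype.card n - (k + 1)) * D.det := by
        rw [adjugate_mul, trace_smul, trace_one, Fintype.card_fin, smul_eq_mul]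
        push_cast
        ring

end BorderedDeterminant

section LeviCivita

open Matrix

theorem lev_eq_det_s11 (v : Fin 4 → Fin 4) :
    lev (v 0) (v 1) (v 2) (v 3) = ((1 : Matrix (Fin 4) (Fin 4) ℝ).submatrix v id).det := by
  let x : Fin 4 → ℝ := fun i => (i : ℕ)
  have det_nodes (w : Fin 4 → Fin 4) :
      (vandermonde (x ∘ w)).det = 12 * lev (w 0) (w 1) (w 2) (w 3) := by
    simp only [det_vandermonde, Function.comp_apply, Fin.prod_univ_succ, Fin.Ioi_zero_eq_map,
      Nat.reduceAdd, Finset.prod_map, Fin.coe_succEmb, Fin.succ_zero_eq_one, Fin.succ_one_eq_two,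
      Finset.univ_unique, Fin.default_eq_zero, Finset.prod_singleton, Fin.reduceSucc,
      Fin.prod_Ioi_succ, Finset.map_singleton, isMax_iff_eq_top, Fin.zero_eq_top,
      IsMax.finsetIoi_eq, Finset.prod_empty, mul_one, lev, x]
    ring
  -- The Vandermonde matrix at the nodes `v i` consists of rows of the one at `0, 1, 2, 3`.
  have select_rows : vandermonde (x ∘ v) =
      (1 : Matrix (Fin 4) (Fin 4) ℝ).submatrix v id * vandermonde (x ∘ id) := by
    ext i j
    simp [vandermonde_apply, mul_apply, one_apply]
  have hlev := det_nodes v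
  have h0123 : lev 0 1 2 3 = 1 := by norm_num [lev]
  rw [select_rows, det_mul, det_nodes id] at hlev
  simp only [id_eq, h0123] at hlev
  linarith

theorem lev_mul_lev (v w : Fin 4 → Fin 4) :
    lev (v 0) (v 1) (v 2) (v 3) * lev (w 0) (w 1) (w 2) (w 3) =
      ((1 : Matrix (Fin 4) (Fin 4) ℝ).submatrix v w).det := by
  rw [lev_eq_det_s11, lev_eq_det_s11, ← det_transpose (submatrix _ w id), ← det_mul,
    transpose_submatrix, transpose_one, ← submatrix_mul _ _ _ _ _ Function.bijective_id, one_mul]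

theorem sum_lev_mul_lev (v w : Fin 3 → Fin 4) :
    ∑ i, lev i (v 0) (v 1) (v 2) * lev i (w 0) (w 1) (w 2) =
      ((1 : Matrix (Fin 4) (Fin 4) ℝ).submatrix v w).det := by
  have as_det (i : Fin 4) : lev i (v 0) (v 1) (v 2) * lev i (w 0) (w 1) (w 2) =
      ((1 : Matrix (Fin 4) (Fin 4) ℝ).submatrix (vecCons i v) (vecCons i w)).det :=
    lev_mul_lev (vecCons i v) (vecCons i w)
  simp only [as_det, sum_det_submatrix_one]
  norm_num

theorem det_submatrix_one_fin_three (q a b r m n : Fin 4) :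
    ((1 : Matrix (Fin 4) (Fin 4) ℝ).submatrix ![q, a, b] ![r, m, n]).det =
      kd q r * (kd a m * kd b n - kd a n * kd b m) -
        kd a r * (kd q m * kd b n - kd q n * kd b m) +
        kd b r * (kd q m * kd a n - kd q n * kd a m) := by
  rw [det_fin_three]
  change kd q r * kd a m * kd b n - kd q r * kd a n * kd b m - kd q m * kd a r * kd b n +
    kd q m * kd a n * kd b r + kd q n * kd a r * kd b m - kd q n * kd a m * kd b r = _
  ring

theorem sum_mul_det_submatrix_one (G : Fin 4 → Fin 4 → ℝ) (q a b r : Fin 4) :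
    ∑ m, ∑ n, G m n * ((1 : Matrix (Fin 4) (Fin 4) ℝ).submatrix ![q, a, b] ![r, m, n]).det =
      kd q r * (G a b - G b a) - kd a r * (G q b - G b q) + kd b r * (G q a - G a q) := by
  have sift (x y : Fin 4) : ∑ m, ∑ n, kd x m * kd y n * G m n = G x y := by
    simp [kd]
  have sift_swap (x y : Fin 4) : ∑ m, ∑ n, kd x n * kd y m * G m n = G y x := by
    simp [kd]
  have scale (z x y : Fin 4) : ∑ m, ∑ n, kd z r * (kd x m * kd y n - kd x n * kd y m) * G m n =
      kd z r * (G x y - G y x) := by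
    simp only [mul_assoc (kd z r), ← Finset.mul_sum, sub_mul, Finset.sum_sub_distrib, sift,
      sift_swap]
  simp only [← scale, ← Finset.sum_add_distrib, ← Finset.sum_sub_distrib,
    det_submatrix_one_fin_three]
  exact Finset.sum_congr rfl fun m _ => Finset.sum_congr rfl fun n _ => by ring

theorem sum_mink_mul (a : Fin 4) (f : Fin 4 → ℝ) : ∑ r, mink a r * f r = mink a a * f a := by
  simp [mink]

theorem mink_self_mul_mink_self (a : Fin 4) : mink a a * mink a a = 1 := by
  by_cases h : a = 0 <;> simp [mink, h]

theorem prod_mink_mul_lev (v : Fin 4 → Fin 4) :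
    (∏ i, mink (v i) (v i)) * lev (v 0) (v 1) (v 2) (v 3) = -lev (v 0) (v 1) (v 2) (v 3) := by
  have scale : diagonal (fun i => mink (v i) (v i)) * submatrix (1 : Matrix _ _ ℝ) v id =
      submatrix (1 : Matrix _ _ ℝ) v id * diagonal (fun i => mink i i) := by
    ext i j
    by_cases h : v i = j <;> simp [one_apply, h]
  have hdet := congrArg det scale
  rw [det_mul, det_mul, ← lev_eq_det_s11, det_diagonal, det_diagonal] at hdet
  rw [hdet]
  simp [Fin.prod_univ_four, mink]

theorem levUp_eq (a b p q : Fin 4) : levUp a b p q = mink p p * mink q q * lev a b p q := by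
  simp only [levUp, mul_assoc, ← Finset.mul_sum, sum_mink_mul]

theorem levUp_eq_neg (a b p q : Fin 4) :
    levUp a b p q = -(mink a a * mink b b * lev p q a b) := by
  have hswap : lev p q a b = lev a b p q := by
    simp only [lev]
    ring
  have hneg := prod_mink_mul_lev ![a, b, p, q]
  simp only [Fin.prod_univ_four, cons_val_zero, cons_val_one, cons_val] at hneg
  rw [levUp_eq, hswap]
  linear_combination (mink a a * mink b b) * hneg - mink p p * mink q q * lev a b p q *
    (mink b b * mink b b * mink_self_mul_mink_self a + mink_self_mul_mink_self b)

theorem levUp_swap (a b p q : Fin 4) : levUp a b p q = -levUp a b q p := by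
  simp only [levUp_eq, lev]
  ring

theorem sum_levUp_mul_levUp (a b q r m n : Fin 4) :
    ∑ p, levUp a b p q * levUp p r m n = -(mink a a * mink b b * mink m m * mink n n *
      ((1 : Matrix (Fin 4) (Fin 4) ℝ).submatrix ![q, a, b] ![r, m, n]).det) := by
  rw [← sum_lev_mul_lev, Finset.mul_sum, ← Finset.sum_neg_distrib]
  refine Finset.sum_congr rfl fun p _ => ?_
  rw [levUp_eq_neg, levUp_eq p]
  simp only [cons_val_zero, cons_val_one, cons_val]
  ring

end LeviCivita

section ElectricMagnetic

theorem mink_eq_mul_kd (a b : Fin 4) : mink a b = mink a a * kd a b := by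
  by_cases h : a = b
  · simp [mink, kd, h]
  · simp [mink, kd, h]

theorem sum_levUp_mul_hodge2 {F : Fin 4 → Fin 4 → ℝ} (hF : ∀ a b, F a b = -F b a)
    (a b q r : Fin 4) :
    ∑ p, levUp a b p q * hodge2 F p r =
      -(kd q r * F a b + mink a r * mink q q * F b q - mink b r * mink q q * F a q) := by
  have expand : ∑ p, levUp a b p q * hodge2 F p r =
      (1 / 2) * ∑ m, ∑ n, (∑ p, levUp a b p q * levUp p r m n) * F m n := by
    simp only [hodge2, Finset.mul_sum, Finset.sum_mul]
    rw [Finset.sum_comm]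
    refine Finset.sum_congr rfl fun m _ => ?_
    rw [Finset.sum_comm]
    refine Finset.sum_congr rfl fun n _ => Finset.sum_congr rfl fun p _ => ?_
    ring
  have contract : ∑ m, ∑ n, (∑ p, levUp a b p q * levUp p r m n) * F m n =
      -(mink a a * mink b b * ∑ m, ∑ n, mink m m * mink n n * F m n *
        ((1 : Matrix (Fin 4) (Fin 4) ℝ).submatrix ![q, a, b] ![r, m, n]).det) := by
    simp only [sum_levUp_mul_levUp, Finset.mul_sum, ← Finset.sum_neg_distrib]
    refine Finset.sum_congr rfl fun m _ => Finset.sum_congr rfl fun n _ => ?_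
    ring
  rw [expand, contract, sum_mul_det_submatrix_one (fun m n => mink m m * mink n n * F m n),
    mink_eq_mul_kd a r, mink_eq_mul_kd b r, hF b a, hF q b, hF q a]
  have ha := mink_self_mul_mink_self a
  have hb := mink_self_mul_mink_self b
  linear_combination
    -kd q r * F a b * (mink b b * mink b b * ha + hb) -
      mink a a * mink q q * kd a r * F b q * hb +
      mink b b * mink q q * kd b r * F a q * ha

theorem hodge2_wedge (u v : Fin 4 → ℝ) (a b : Fin 4) :
    hodge2 (fun p q => u p * v q - u q * v p) a b = ∑ p, ∑ q, levUp a b p q * u p * v q := by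
  have swap : ∑ p, ∑ q, levUp a b p q * (u q * v p) = -∑ p, ∑ q, levUp a b p q * (u p * v q) := by
    rw [Finset.sum_comm]
    simp only [← Finset.sum_neg_distrib, ← neg_mul, ← levUp_swap]
  simp only [hodge2, mul_sub, Finset.sum_sub_distrib, swap, mul_assoc]
  ring

/-- The electric part `F_{ap} t^p t_b − F_{bp} t^p t_a` of a 2-form along `t`. -/
def electric (t : Fin 4 → ℝ) : Module.End ℝ (Fin 4 → Fin 4 → ℝ) where
  toFun F a b := (∑ p, F a p * t p) * tlow t b - (∑ p, F b p * t p) * tlow t a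
  map_add' F G := by
    funext a b
    simp only [Pi.add_apply, add_mul, Finset.sum_add_distrib]
    ring
  map_smul' r F := by
    funext a b
    simp only [Pi.smul_apply, smul_eq_mul, RingHom.id_apply, mul_assoc, ← Finset.mul_sum]
    ring

/-- The Hodge dual `hodge2` as a linear operator. -/
def hodge : Module.End ℝ (Fin 4 → Fin 4 → ℝ) where
  toFun := hodge2
  map_add' F G := by
    funext a b
    simp only [hodge2, Pi.add_apply, mul_add, Finset.sum_add_distrib]
  map_smul' r F := by
    funext a b
    simp only [hodge2, Pi.smul_apply, smul_eq_mul, RingHom.id_apply, mul_left_comm _ r,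
      ← Finset.mul_sum]

theorem sum_sum_levUp_mul_hodge2_mul (t : Fin 4 → ℝ) {F : Fin 4 → Fin 4 → ℝ}
    (hF : ∀ a b, F a b = -F b a) (a b q : Fin 4) :
    ∑ r, (∑ p, levUp a b p q * hodge2 F p r) * t r * tlow t q =
      F a q * t q * tlow t b - F b q * t q * tlow t a - t q * tlow t q * F a b := by
  have raise : mink q q * tlow t q = t q := by
    rw [tlow, sum_mink_mul, ← mul_assoc, mink_self_mul_mink_self, one_mul]
  have sift : ∑ r, kd q r * t r = t q := by
    simp only [kd, ite_mul, one_mul, zero_mul, Finset.sum_ite_eq, Finset.mem_univ, if_true]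
  have lower (x : Fin 4) : tlow t x = ∑ r, mink x r * t r := rfl
  calc ∑ r, (∑ p, levUp a b p q * hodge2 F p r) * t r * tlow t q
      = (mink q q * tlow t q) * F a q * tlow t b - (mink q q * tlow t q) * F b q * tlow t a -
          tlow t q * F a b * ∑ r, kd q r * t r := by
        simp only [sum_levUp_mul_hodge2 hF, lower a, lower b, Finset.mul_sum,
          ← Finset.sum_sub_distrib]
        exact Finset.sum_congr rfl fun r _ => by ring
    _ = F a q * t q * tlow t b - F b q * t q * tlow t a - t q * tlow t q * F a b := by
        rw [raise, sift]
        ring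

theorem sum_mul_tlow (t : Fin 4 → ℝ) :
    ∑ q, t q * tlow t q = ∑ q, ∑ s, mink q s * t q * t s := by
  simp only [tlow, Finset.mul_sum, mul_assoc, mul_left_comm (t _)]

theorem hodge2_electric_hodge2 (t : Fin 4 → ℝ) {F : Fin 4 → Fin 4 → ℝ}
    (hF : ∀ a b, F a b = -F b a) (a b : Fin 4) :
    hodge2 (electric t (hodge2 F)) a b =
      electric t F a b - (∑ q, ∑ s, mink q s * t q * t s) * F a b := by
  calc hodge2 (electric t (hodge2 F)) a b
      = ∑ p, ∑ q, levUp a b p q * (∑ r, hodge2 F p r * t r) * tlow t q :=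
        hodge2_wedge (fun p => ∑ r, hodge2 F p r * t r) (tlow t) a b
    _ = ∑ q, ∑ r, (∑ p, levUp a b p q * hodge2 F p r) * t r * tlow t q := by
        simp only [Finset.mul_sum, Finset.sum_mul, mul_assoc]
        rw [Finset.sum_comm]
        exact Finset.sum_congr rfl fun q _ => Finset.sum_comm
    _ = electric t F a b - (∑ q, t q * tlow t q) * F a b := by
        simp only [sum_sum_levUp_mul_hodge2_mul t hF, Finset.sum_sub_distrib, ← Finset.sum_mul]
        rfl
    _ = electric t F a b - (∑ q, ∑ s, mink q s * t q * t s) * F a b := by rw [sum_mul_tlow]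

theorem electric_sub_hodge_electric_hodge (t : Fin 4 → ℝ) {F : Fin 4 → Fin 4 → ℝ}
    (hF : ∀ a b, F a b = -F b a) :
    (electric t - hodge * electric t * hodge) F = (∑ q, ∑ s, mink q s * t q * t s) • F := by
  funext a b
  change electric t F a b - hodge2 (electric t (hodge2 F)) a b = _ * F a b
  rw [hodge2_electric_hodge2 t hF, sub_sub_cancel]

end ElectricMagnetic

section DoubleForms

theorem leftAct_rightAct_electric (t : Fin 4 → ℝ) (X : Fin 4 → Fin 4 → Fin 4 → Fin 4 → ℝ) :
    leftAct (electric t) (rightAct (electric t) X) =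
      kn (frakA X t) (fun p q => tlow t p * tlow t q) := by
  funext a b c d
  have contract (a c d : Fin 4) : ∑ b, rightAct (electric t) X a b c d * t b =
      frakA X t a c * tlow t d - frakA X t a d * tlow t c := by
    simp only [rightAct_apply, electric, LinearMap.coe_mk, AddHom.coe_mk, frakA, Finset.sum_mul,
      sub_mul, Finset.sum_sub_distrib]
    refine congrArg₂ (· - ·) ?_ ?_ <;>
      exact Finset.sum_congr rfl fun b _ => Finset.sum_congr rfl fun p _ => by ring
  calc leftAct (electric t) (rightAct (electric t) X) a b c d
      = (∑ p, rightAct (electric t) X a p c d * t p) * tlow t b -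
          (∑ p, rightAct (electric t) X b p c d * t p) * tlow t a := rfl
    _ = kn (frakA X t) (fun p q => tlow t p * tlow t q) a b c d := by
        rw [contract, contract, kn]
        ring

theorem dblD_eq_leftAct_rightAct (X : Fin 4 → Fin 4 → Fin 4 → Fin 4 → ℝ) :
    dblD X = leftAct hodge (rightAct hodge X) := by
  funext a b c d
  change _ = (1 / 2) * ∑ p, ∑ q, levUp a b p q * ((1 / 2) * ∑ r, ∑ s, levUp c d r s * X p q r s)
  simp only [dblD, Finset.mul_sum]
  ring_nf

theorem kn_neg_left (k h : Fin 4 → Fin 4 → ℝ) : kn (-k) h = -kn k h := by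
  funext a b c d
  simp only [kn, Pi.neg_apply]
  ring

theorem leftAct_electric_sub_hodge (t : Fin 4 → ℝ) {X : Fin 4 → Fin 4 → Fin 4 → Fin 4 → ℝ}
    (hX : ∀ a b c d, X a b c d = -X b a c d) :
    leftAct (electric t - hodge * electric t * hodge) X =
      (∑ q, ∑ s, mink q s * t q * t s) • X := by
  funext a b c d
  exact congrFun₂ (electric_sub_hodge_electric_hodge t fun p q => hX p q c d) a b

theorem rightAct_electric_sub_hodge (t : Fin 4 → ℝ) {X : Fin 4 → Fin 4 → Fin 4 → Fin 4 → ℝ}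
    (hX : ∀ a b c d, X a b c d = -X a b d c) :
    rightAct (electric t - hodge * electric t * hodge) X =
      (∑ q, ∑ s, mink q s * t q * t s) • X := by
  funext a b c d
  exact congrFun₂ (electric_sub_hodge_electric_hodge t (hX a b)) c d

theorem normSq_sq_smul_eq (t : Fin 4 → ℝ) {X : Fin 4 → Fin 4 → Fin 4 → Fin 4 → ℝ}
    (h1 : ∀ a b c d, X a b c d = -X b a c d) (h2 : ∀ a b c d, X a b c d = -X a b d c) :
    (∑ q, ∑ s, mink q s * t q * t s) ^ 2 • X =
      kn (frakA X t) (fun p q => tlow t p * tlow t q) -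
      rightAct hodge (kn (frakA (rightAct hodge X) t) fun p q => tlow t p * tlow t q) -
      leftAct hodge (kn (frakA (leftAct hodge X) t) fun p q => tlow t p * tlow t q) +
      leftAct hodge (rightAct hodge
        (kn (frakA (leftAct hodge (rightAct hodge X)) t) fun p q => tlow t p * tlow t q)) := by
  have split := sub_conj_mul_sub_conj (commute_leftAct_rightAct (κ := Fin 4) hodge (electric t))
    (commute_leftAct_rightAct (electric t) hodge) (commute_leftAct_rightAct hodge hodge)
  simp only [← map_mul, ← map_sub] at split
  rw [sq, ← smul_smul, ← leftAct_electric_sub_hodge t h1, ← map_smul,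
    ← rightAct_electric_sub_hodge t h2]
  simp only [← leftAct_rightAct_electric]
  exact LinearMap.congr_fun split X

end DoubleForms

theorem bel_matte_decomposition_general (X : Fin 4 → Fin 4 → Fin 4 → Fin 4 → ℝ)
    (h1 : ∀ a b c d, X a b c d = -X b a c d)
    (h2 : ∀ a b c d, X a b c d = -X a b d c)
    (t : Fin 4 → ℝ) (a b c d : Fin 4) :
    (∑ q, ∑ s, mink q s * t q * t s) ^ 2 * X a b c d =
      kn (frakA X t) (fun p q => tlow t p * tlow t q) a b c d +
      rightD (kn (frakB X t) (fun p q => tlow t p * tlow t q)) a b c d +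
      leftD (kn (frakC X t) (fun p q => tlow t p * tlow t q)) a b c d +
      dblD (kn (frakD X t) (fun p q => tlow t p * tlow t q)) a b c d := by
  let T : Fin 4 → Fin 4 → ℝ := fun p q => tlow t p * tlow t q
  have hB : rightD (kn (frakB X t) T) = -rightAct hodge (kn (frakA (rightAct hodge X) t) T) := by
    rw [← map_neg, ← kn_neg_left]
    rfl
  have hC : leftD (kn (frakC X t) T) = -leftAct hodge (kn (frakA (leftAct hodge X) t) T) := by
    rw [← map_neg, ← kn_neg_left]
    rfl
  have hD : frakD X t = frakA (leftAct hodge (rightAct hodge X)) t := by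
    rw [← dblD_eq_leftAct_rightAct]
    rfl
  rw [hB, hC, hD, dblD_eq_leftAct_rightAct, Pi.neg_apply]
  exact congrFun₂ (congrFun₂ (normSq_sq_smul_eq t h1 h2) a b) c d

/-- Generalised Bel–Matte decomposition of an arbitrary (2,2) double form with
respect to an arbitrary non-lightlike vector `t`. -/
theorem bel_matte_decomposition (X : Fin 4 → Fin 4 → Fin 4 → Fin 4 → ℝ)
    (h1 : ∀ a b c d, X a b c d = -X b a c d)
    (h2 : ∀ a b c d, X a b c d = -X a b d c)
    (t : Fin 4 → ℝ) (ht : (∑ q, ∑ s, mink q s * t q * t s) ≠ 0) :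
    ∀ a b c d,
      (∑ q, ∑ s, mink q s * t q * t s) ^ 2 * X a b c d =
        kn (frakA X t) (fun p q => tlow t p * tlow t q) a b c d +
        rightD (kn (frakB X t) (fun p q => tlow t p * tlow t q)) a b c d +
        leftD (kn (frakC X t) (fun p q => tlow t p * tlow t q)) a b c d +
        dblD (kn (frakD X t) (fun p q => tlow t p * tlow t q)) a b c d := by
  exact bel_matte_decomposition_general X h1 h2 t
end
end
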